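/- Let 0 < γ < π/2 and define f : [0, π/2 − γ) → ℝ by f(x) = tan(x)/tan(γ + x). Then f is monotone increasing on [0, (1/2)(π/2 − γ)] and monotone decreasing on [(1/2)(π/2 − γ), π/2 − γ). -/

import Mathlib

/-!
Product-to-sum formulas turn `tan x / tan (γ + x)` into `(s - c) / (s + c)` with
`s = sin (2 * x + γ)` and `c = sin γ > 0`, which increases with `s`, and `s` increases in `x` until
`2 * x + γ = π / 2`. Since `tan (π / 2 - x) = (tan x)⁻¹`, the quotient is symmetric about that
point, so it decreases afterwards.
-/

open Real

lemma tan_div_tan_eq_sin_sub_div_sin_add (x y : ℝ) :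
    tan x / tan y = (sin (x + y) - sin (y - x)) / (sin (x + y) + sin (y - x)) := by
  have hnum : sin (x + y) - sin (y - x) = 2 * (sin x * cos y) := by
    rw [sin_add, sin_sub]; ring
  have hden : sin (x + y) + sin (y - x) = 2 * (cos x * sin y) := by
    rw [sin_add, sin_sub]; ring
  rw [hnum, hden, mul_div_mul_left _ _ two_ne_zero, tan_eq_sin_div_cos,
    tan_eq_sin_div_cos, div_div_div_eq]

lemma strictMonoOn_sub_div_add {K : Type*} [Field K] [LinearOrder K] [IsStrictOrderedRing K]
    {c : K} (hc : 0 < c) : StrictMonoOn (fun s : K ↦ (s - c) / (s + c)) (Set.Ioi (-c)) := by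
  intro s hs t ht hst
  have hs' : 0 < s + c := neg_lt_iff_pos_add.mp hs
  have ht' : 0 < t + c := neg_lt_iff_pos_add.mp ht
  have hcst : c * s < c * t := mul_lt_mul_of_pos_left hst hc
  exact (div_lt_div_iff₀ hs' ht').mpr (by linarith)

lemma tan_div_tan_add_reflect (γ x : ℝ) :
    tan (π / 2 - γ - x) / tan (γ + (π / 2 - γ - x)) = tan x / tan (γ + x) := by
  rw [sub_sub, tan_pi_div_two_sub, show γ + (π / 2 - (γ + x)) = π / 2 - x by ring,
    tan_pi_div_two_sub, inv_div_inv]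

lemma strictMonoOn_sin_two_mul_add (γ : ℝ) :
    StrictMonoOn (fun x ↦ sin (2 * x + γ))
      (Set.Icc ((-(π / 2) - γ) / 2) ((π / 2 - γ) / 2)) := by
  rintro x ⟨hx, -⟩ y ⟨-, hy⟩ hxy
  exact sin_lt_sin_of_lt_of_le_pi_div_two (by linarith) (by linarith) (by linarith)

lemma strictMonoOn_tan_div_tan_add {γ : ℝ} (hγ0 : 0 < γ) (hγ : γ < π) :
    StrictMonoOn (fun x ↦ tan x / tan (γ + x)) (Set.Icc (-γ / 2) ((π / 2 - γ) / 2)) := by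
  have hsin : 0 < sin γ := sin_pos_of_pos_of_lt_pi hγ0 hγ
  have tan_div_tan_add (x : ℝ) :
      tan x / tan (γ + x) = (sin (2 * x + γ) - sin γ) / (sin (2 * x + γ) + sin γ) := by
    rw [tan_div_tan_eq_sin_sub_div_sin_add, add_sub_cancel_right,
      show x + (γ + x) = 2 * x + γ by ring]
  simp only [tan_div_tan_add]
  refine (strictMonoOn_sub_div_add hsin).comp
    ((strictMonoOn_sin_two_mul_add γ).mono
      (Set.Icc_subset_Icc_left (by linarith [pi_pos]))) ?_
  rintro x ⟨hx, hx'⟩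
  have : 0 ≤ sin (2 * x + γ) :=
    sin_nonneg_of_nonneg_of_le_pi (by linarith) (by linarith [pi_pos])
  exact (neg_neg_of_pos hsin).trans_le this

lemma strictAntiOn_tan_div_tan_add {γ : ℝ} (hγ0 : 0 < γ) (hγ : γ < π) :
    StrictAntiOn (fun x ↦ tan x / tan (γ + x)) (Set.Icc ((π / 2 - γ) / 2) ((π - γ) / 2)) := by
  rintro x ⟨hx, -⟩ y ⟨-, hy⟩ hxy
  have h := strictMonoOn_tan_div_tan_add hγ0 hγ
    (a := π / 2 - γ - y) ⟨by linarith, by linarith⟩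
    (b := π / 2 - γ - x) ⟨by linarith, by linarith⟩ (by linarith)
  simpa only [tan_div_tan_add_reflect] using h

-- At the pole `x = π / 2 - γ` of `tan (γ + x)` the quotient is `0`, which is also its limit there.
theorem stmt_1_general (γ : ℝ) (hγ0 : 0 < γ) (hγ : γ < π) :
    StrictMonoOn (fun x : ℝ ↦ tan x / tan (γ + x)) (Set.Icc (-γ / 2) ((π / 2 - γ) / 2)) ∧
    StrictAntiOn (fun x : ℝ ↦ tan x / tan (γ + x))
      (Set.Icc ((π / 2 - γ) / 2) ((π - γ) / 2)) :=
  ⟨strictMonoOn_tan_div_tan_add hγ0 hγ, strictAntiOn_tan_div_tan_add hγ0 hγ⟩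

/-- For `0 < γ < π/2`, the function `f(x) = tan x / tan(γ + x)` is monotone
increasing on `[0, (1/2)(π/2 − γ)]` and monotone decreasing on `[(1/2)(π/2 − γ), π/2 − γ)`. -/
theorem stmt_1 (γ : ℝ) (hγ0 : 0 < γ) (hγ1 : γ < π / 2) :
    MonotoneOn (fun x : ℝ => Real.tan x / Real.tan (γ + x))
      (Set.Icc 0 ((π / 2 - γ) / 2)) ∧
    AntitoneOn (fun x : ℝ => Real.tan x / Real.tan (γ + x))
      (Set.Ico ((π / 2 - γ) / 2) (π / 2 - γ)) := by
  obtain ⟨hmono, hanti⟩ := stmt_1_general γ hγ0 (by linarith)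
  exact ⟨hmono.monotoneOn.mono (Set.Icc_subset_Icc_left (by linarith)),
    hanti.antitoneOn.mono fun x hx ↦ ⟨hx.1, by linarith [hx.2]⟩⟩
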